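/- Let F be the presented group with generators a, b, c, d and relators a², b², c², d², bcd. Let K be the subgroup generated by b, c, d and A the subgroup generated by a. For a sequence (ω_n) of homomorphisms ω_n : K → A, let φ_n : F → F ≀ 2 be the homomorphism with φ_n(a) = ⟨1,1⟩σ (σ the transposition) and φ_n(x) = ⟨ω_n(x), x⟩ for x ∈ {b, c, d}. Then the similar group (G_n = F, φ_n, d_n = 2) contracts to the constant sequence N_n = image of {1, a, b, c, d} in F: for every n and every g ∈ F, for all sufficiently large m, every entry of φ_n^m(g) lies in the image of {1, a, b, c, d}. -/

import Mathlib

/-- The natural action of `Equiv.Perm (Fin d)` on `Fin d → G`, `(σ • f) i = f (σ⁻¹ i)`. -/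
def permAut (G : Type*) [Group G] (d : ℕ) :
    Equiv.Perm (Fin d) →* MulAut (Fin d → G) where
  toFun σ :=
    { toFun := fun f i => f (σ⁻¹ i)
      invFun := fun f i => f (σ i)
      left_inv := fun f => funext fun i => by simp
      right_inv := fun f => funext fun i => by simp
      map_mul' := fun f g => rfl }
  map_one' := by
    ext f i
    simp
  map_mul' := fun σ τ => by
    ext f i
    simp [mul_inv_rev]

/-- The permutational wreath product `G ≀ d = (Fin d → G) ⋊ Equiv.Perm (Fin d)`. -/
abbrev Wr (G : Type*) [Group G] (d : ℕ) :=
  (Fin d → G) ⋊[permAut G d] Equiv.Perm (Fin d)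

/-- The four generators `a, b, c, d` of the Grigorchuk cover. -/
inductive GrigGen : Type
  | a | b | c | d
  deriving DecidableEq

open GrigGen in
/-- The relators `a², b², c², d², bcd`. -/
def grigRels : Set (FreeGroup GrigGen) :=
  {FreeGroup.of a ^ 2, FreeGroup.of b ^ 2, FreeGroup.of c ^ 2, FreeGroup.of d ^ 2,
    FreeGroup.of b * FreeGroup.of c * FreeGroup.of d}

/-- The presented group `F = ⟨a,b,c,d ∣ a², b², c², d², bcd⟩ ≅ C₂ * (C₂ × C₂)`. -/
abbrev GrigF : Type := PresentedGroup grigRels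


open GrigGen

/-- The subgroup `K = ⟨b, c, d⟩` of `F`. -/
def GrigK : Subgroup GrigF :=
  Subgroup.closure {PresentedGroup.of b, PresentedGroup.of c, PresentedGroup.of d}

/-- The subgroup `A = ⟨a⟩` of `F`. -/
def GrigA : Subgroup GrigF :=
  Subgroup.closure {PresentedGroup.of a}

/-- The entry (state) of `φ_n^m (g)` at the multi-index `w : Fin m → Fin 2`, for a
sequence of self-similarity structures `φ n : F →* F ≀ 2` on a fixed group `F`. -/
def stSeq {F : Type*} [Group F] (φ : ℕ → (F →* Wr F 2)) (n : ℕ) :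
    (m : ℕ) → F → (Fin m → Fin 2) → F
  | 0, g, _ => g
  | m+1, g, w => (φ (n+m) (stSeq φ n m g fun k => w k.castSucc)).left (w (Fin.last m))

/-- Klein letters. -/
def IsKL (x : GrigF) : Prop :=
  x = PresentedGroup.of b ∨ x = PresentedGroup.of c ∨ x = PresentedGroup.of d

/-- Alternating words of given length; `true` means starting with `a`. -/
inductive AltW : Bool → ℕ → GrigF → Prop
  | one (t : Bool) : AltW t 0 1
  | consA (l : ℕ) (h : GrigF) : AltW false l h → AltW true (l+1) (PresentedGroup.of a * h)
  | consK (l : ℕ) (x h : GrigF) : IsKL x → AltW true l h → AltW false (l+1) (x * h)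

/-- Elements of length at most `L`. -/
def LenLE (L : ℕ) (g : GrigF) : Prop := ∃ l ≤ L, ∃ t, AltW t l g

theorem LenLE.mono {L L' : ℕ} {g : GrigF} (h : LenLE L g) (hL : L ≤ L') : LenLE L' g := by
  obtain ⟨l, hl, t, ht⟩ := h
  exact ⟨l, hl.trans hL, t, ht⟩

theorem grig_rel {r : FreeGroup GrigGen} (h : r ∈ grigRels) :
    PresentedGroup.mk grigRels r = 1 :=
  PresentedGroup.one_of_mem h

theorem gaa : (PresentedGroup.of a : GrigF) * PresentedGroup.of a = 1 := by
  have := grig_rel (r := FreeGroup.of a ^ 2) (by simp [grigRels])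
  rwa [map_pow, pow_two] at this

theorem gbb : (PresentedGroup.of b : GrigF) * PresentedGroup.of b = 1 := by
  have := grig_rel (r := FreeGroup.of b ^ 2) (by simp [grigRels])
  rwa [map_pow, pow_two] at this

theorem gcc : (PresentedGroup.of c : GrigF) * PresentedGroup.of c = 1 := by
  have := grig_rel (r := FreeGroup.of c ^ 2) (by simp [grigRels])
  rwa [map_pow, pow_two] at this

theorem gdd : (PresentedGroup.of d : GrigF) * PresentedGroup.of d = 1 := by
  have := grig_rel (r := FreeGroup.of d ^ 2) (by simp [grigRels])
  rwa [map_pow, pow_two] at this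

theorem gbcd : (PresentedGroup.of b : GrigF) * PresentedGroup.of c * PresentedGroup.of d = 1 := by
  have := grig_rel (r := FreeGroup.of b * FreeGroup.of c * FreeGroup.of d) (by simp [grigRels])
  rwa [map_mul, map_mul] at this

theorem klein_mul {G : Type*} [Group G] {x y z : G} (hx : x * x = 1) (hy : y * y = 1)
    (hz : z * z = 1) (h : x * y * z = 1) :
    x * y = z ∧ y * z = x ∧ z * x = y ∧ y * x = z ∧ z * y = x ∧ x * z = y := by
  have hx' : x⁻¹ = x := inv_eq_of_mul_eq_one_left hx
  have hy' : y⁻¹ = y := inv_eq_of_mul_eq_one_left hy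
  have hz' : z⁻¹ = z := inv_eq_of_mul_eq_one_left hz
  have h1 : x * y = z := by rw [← hz']; exact eq_inv_of_mul_eq_one_left h
  have h2 : y * x = z := by rw [← hz', ← h1, mul_inv_rev, hx', hy']
  refine ⟨h1, ?_, ?_, h2, ?_, ?_⟩
  · rw [← h2, ← mul_assoc, hy, one_mul]
  · rw [← h2, mul_assoc, hx, mul_one]
  · rw [← h1, mul_assoc, hy, mul_one]
  · rw [← h1, ← mul_assoc, hx, one_mul]

theorem IsKL.mul {x y : GrigF} (hx : IsKL x) (hy : IsKL y) : x * y = 1 ∨ IsKL (x * y) := by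
  obtain ⟨h1, h2, h3, h4, h5, h6⟩ := klein_mul gbb gcc gdd gbcd
  rcases hx with rfl | rfl | rfl <;> rcases hy with rfl | rfl | rfl <;>
    simp [gbb, gcc, gdd, h1, h2, h3, h4, h5, h6, IsKL]

theorem LenLE.a_mul {L : ℕ} {g : GrigF} (h : LenLE L g) :
    LenLE (L+1) (PresentedGroup.of a * g) := by
  obtain ⟨l, hl, t, ht⟩ := h
  cases ht with
  | one t => exact ⟨1, by omega, true, .consA 0 1 (.one _)⟩
  | consA l h hh =>
    rw [← mul_assoc, gaa, one_mul]
    exact ⟨l, by omega, _, hh⟩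
  | consK l x h hx hh => exact ⟨l+1+1, by omega, true, .consA _ _ (.consK _ _ _ hx hh)⟩

theorem LenLE.k_mul {L : ℕ} {x g : GrigF} (hx : IsKL x) (h : LenLE L g) :
    LenLE (L+1) (x * g) := by
  obtain ⟨l, hl, t, ht⟩ := h
  cases ht with
  | one t => exact ⟨1, by omega, false, .consK 0 x 1 hx (.one _)⟩
  | consA l h hh => exact ⟨l+1+1, by omega, false, .consK _ _ _ hx (.consA _ _ hh)⟩
  | consK l y h hy hh =>
    rw [← mul_assoc]
    rcases hx.mul hy with e | e
    · rw [e, one_mul]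
      exact ⟨l, by omega, _, hh⟩
    · exact ⟨l+1, by omega, false, .consK _ _ _ e hh⟩

theorem gen_cases (s : GrigGen) :
    (PresentedGroup.of s : GrigF) = PresentedGroup.of a ∨ IsKL (PresentedGroup.of s) := by
  cases s <;> simp [IsKL]

theorem gen_inv (s : GrigGen) :
    (PresentedGroup.of s : GrigF)⁻¹ = PresentedGroup.of s := by
  apply inv_eq_of_mul_eq_one_left
  cases s
  exacts [gaa, gbb, gcc, gdd]

theorem LenLE.gen_mul {L : ℕ} {g : GrigF} (s : GrigGen) (h : LenLE L g) :
    LenLE (L+1) (PresentedGroup.of s * g) := by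
  rcases gen_cases s with e | e
  · rw [e]; exact h.a_mul
  · exact LenLE.k_mul e h

theorem exists_lenLE (g : GrigF) : ∃ L, LenLE L g := by
  have hg : g ∈ Subgroup.closure (Set.range (PresentedGroup.of (rels := grigRels))) := by
    rw [PresentedGroup.closure_range_of]; trivial
  induction hg using Subgroup.closure_induction_left with
  | one => exact ⟨0, 0, le_rfl, true, .one _⟩
  | mul_left x hx y hy ih =>
    obtain ⟨s, rfl⟩ := hx
    obtain ⟨L, hL⟩ := ih
    exact ⟨_, hL.gen_mul s⟩
  | inv_mul_cancel x hx y hy ih =>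
    obtain ⟨s, rfl⟩ := hx
    obtain ⟨L, hL⟩ := ih
    rw [gen_inv]
    exact ⟨_, hL.gen_mul s⟩

theorem mem_GrigA {x : GrigF} (hx : x ∈ GrigA) : x = 1 ∨ x = PresentedGroup.of a := by
  unfold GrigA at hx
  induction hx using Subgroup.closure_induction with
  | mem x hx => exact Or.inr hx
  | one => exact Or.inl rfl
  | mul x y _ _ hx hy =>
    rcases hx with rfl | rfl <;> rcases hy with rfl | rfl <;> simp [gaa]
  | inv x _ hx => rcases hx with rfl | rfl <;> simp [gen_inv]

theorem lenLE_one {g : GrigF} (h : LenLE 1 g) :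
    g ∈ ({1, PresentedGroup.of a, PresentedGroup.of b, PresentedGroup.of c,
          PresentedGroup.of d} : Set GrigF) := by
  obtain ⟨l, hl, t, ht⟩ := h
  cases ht with
  | one t => simp
  | consA l h hh =>
    obtain rfl : l = 0 := by omega
    cases hh; simp
  | consK l x h hx hh =>
    obtain rfl : l = 0 := by omega
    cases hh
    rcases hx with rfl | rfl | rfl <;> simp

/-- A homomorphism to the wreath product of Grigorchuk type. -/
def GoodHom (f : GrigF →* Wr GrigF 2) : Prop :=
  f (PresentedGroup.of a) = SemidirectProduct.mk ![1, 1] (Equiv.swap 0 1) ∧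
  ∀ x, IsKL x → ∃ y ∈ GrigA, f x = SemidirectProduct.mk ![y, x] 1

theorem altW_entry {f : GrigF →* Wr GrigF 2} (hf : GoodHom f) {t : Bool} {l : ℕ} {g : GrigF}
    (h : AltW t l g) : ∀ i, LenLE ((l + (if t then 0 else 1)) / 2) ((f g).left i) := by
  induction h with
  | one t =>
    intro i
    rw [map_one]
    exact ⟨0, by omega, true, .one _⟩
  | consA l h _ ih =>
    intro i
    rw [map_mul, hf.1, SemidirectProduct.mul_left]
    have : ∀ j, ((![1, 1] : Fin 2 → GrigF)) j = 1 := by intro j; fin_cases j <;> rfl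
    rw [Pi.mul_apply]
    dsimp only
    rw [this, one_mul]
    exact (ih _).mono (by simp)
  | consK l x h hx _ ih =>
    intro i
    obtain ⟨y, hy, e⟩ := hf.2 x hx
    rw [map_mul, e, SemidirectProduct.mul_left, Pi.mul_apply]
    simp only [map_one, MulAut.one_apply]
    have key : LenLE (l / 2) ((f h).left i) := (ih i).mono (by simp)
    have hl : (l + 1 + (if false = true then 0 else 1)) / 2 = l / 2 + 1 := by simp; omega
    rw [hl]
    have hi : i = 0 ∨ i = 1 := by fin_cases i <;> simp
    rcases hi with rfl | rfl
    · rcases mem_GrigA hy with rfl | rfl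
      · simpa using key.mono (Nat.le_succ _)
      · exact key.a_mul
    · exact LenLE.k_mul hx key

theorem lenLE_entry {f : GrigF →* Wr GrigF 2} (hf : GoodHom f) {L : ℕ} {g : GrigF}
    (h : LenLE L g) (i : Fin 2) : LenLE ((L + 1) / 2) ((f g).left i) := by
  obtain ⟨l, hl, t, ht⟩ := h
  exact (altW_entry hf ht i).mono (by split <;> omega)

theorem lenLE_stSeq {φ : ℕ → (GrigF →* Wr GrigF 2)} (hφ : ∀ n, GoodHom (φ n)) (n : ℕ)
    {L : ℕ} {g : GrigF} (h : LenLE L g) (m : ℕ) :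
    ∀ w : Fin m → Fin 2, LenLE (max 1 (L - m)) (stSeq φ n m g w) := by
  induction m with
  | zero => intro w; exact h.mono (by omega)
  | succ m ih =>
    intro w
    exact (lenLE_entry (hφ _) (ih _) _).mono (by omega)

/-- For any sequence `(ω n)` of homomorphisms `K → A`, the similar group given by the
sequence of homomorphisms `φ n : F →* F ≀ 2` with `φ n (a) = ⟨1,1⟩(1,2)` and
`φ n (x) = ⟨ω n (x), x⟩` for `x ∈ {b,c,d}` contracts to the constant sequence of finite
subsets given by the image of `{1, a, b, c, d}` in `F`. -/
theorem generalized_grigorchuk_contracting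
    (ω : ℕ → (GrigK →* GrigA)) (φ : ℕ → (GrigF →* Wr GrigF 2))
    (ha : ∀ n, φ n (PresentedGroup.of a) =
      SemidirectProduct.mk ![1, 1] (Equiv.swap 0 1))
    (hb : ∀ n, φ n (PresentedGroup.of b) =
      SemidirectProduct.mk
        ![(ω n ⟨PresentedGroup.of b, Subgroup.subset_closure (by simp)⟩ : GrigF),
          PresentedGroup.of b] 1)
    (hc : ∀ n, φ n (PresentedGroup.of c) =
      SemidirectProduct.mk
        ![(ω n ⟨PresentedGroup.of c, Subgroup.subset_closure (by simp)⟩ : GrigF),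
          PresentedGroup.of c] 1)
    (hd : ∀ n, φ n (PresentedGroup.of d) =
      SemidirectProduct.mk
        ![(ω n ⟨PresentedGroup.of d, Subgroup.subset_closure (by simp)⟩ : GrigF),
          PresentedGroup.of d] 1) :
    ∀ (n : ℕ) (g : GrigF), ∃ M : ℕ, ∀ m ≥ M, ∀ w : Fin m → Fin 2,
      stSeq φ n m g w ∈
        ({1, PresentedGroup.of a, PresentedGroup.of b, PresentedGroup.of c,
          PresentedGroup.of d} : Set GrigF) := by
  intro n g
  have hφ : ∀ n, GoodHom (φ n) := by
    intro n
    refine ⟨ha n, ?_⟩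
    rintro x (rfl | rfl | rfl)
    · exact ⟨_, SetLike.coe_mem _, hb n⟩
    · exact ⟨_, SetLike.coe_mem _, hc n⟩
    · exact ⟨_, SetLike.coe_mem _, hd n⟩
  obtain ⟨L, hL⟩ := exists_lenLE g
  refine ⟨L, fun m hm w => lenLE_one ?_⟩
  exact (lenLE_stSeq hφ n hL m w).mono (by omega)
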